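/- Let 𝒯 be an ℝ-tree and let 𝒯₀ ⊆ 𝒯 be a subset such that for each y ∈ 𝒯₀ the complement 𝒯 ∖ {y} has exactly two connected components, and such that every nondegenerate arc of 𝒯 contains a point of 𝒯₀. Let θ be a continuous map to 𝒯 whose domain is either the real line ℝ or a closed ray [0,∞), regarded as a combinatorial line/ray with vertices at the integers and edges the intervals [n, n+1]. Suppose that θ is transverse to every point of 𝒯₀, and that for every point y ∈ 𝒯 and every edge e of the domain, the intersection e ∩ θ⁻¹(y) is connected. Then at least one of the following holds: (1) there exists a nondegenerate arc α ⊆ 𝒯 such that for every y ∈ α ∩ 𝒯₀ the preimage θ⁻¹(y) has a finite, odd number of connected components; (2) there exists a point y ∈ 𝒯 such that θ⁻¹(y) has infinitely many connected components; (3) for every r ≥ 0 there exists a point y_r ∈ 𝒯 such that θ⁻¹(y_r) has diameter at least r. -/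

import Mathlib

/-!
If the preimages of points have diameter less than some `r`, then the past `Sm` of the path (times
`≤ 0` in the domain) and its future `Sp` (times `≥ r`) have disjoint connected images, i.e. disjoint
subtrees.  The geodesic from `θ 0` to `θ r` meets `Sm` in an initial piece and `Sp` in a final one,
and there are two possibilities.

* The two pieces leave a gap.  A point `y ∈ T₀` in the gap is visited only at times in `(0, r)` and
  separates `θ 0` from `θ r`.  By transversality the visits are isolated, hence finite in number,
  and each one switches between the two components of the complement of `y`; so their number is odd
  (`odd_crossings`, whose counting is `odd_card_iff_flip`).
* The pieces abut at a point `x`.  One of `Sm`, `Sp` misses `x`, yet accumulates at `x` along the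
  geodesic.  By compactness, points of the geodesic close to `x` are reached by that end only at
  times far from `[0, r]`.  They are also reached during `[0, r]`, because the image of `[0, r]` is
  connected and contains `θ 0` and `θ r`.  This contradicts the bound `r` on the diameters.

The only fact about trees that is needed is `mem_of_between`: a connected set containing two points
contains the geodesic segment between them.
-/

open Metric

/-- `f : ℝ → T` restricted to `[0, ℓ]` is a geodesic segment. -/
def IsGeodesicSeg {T : Type*} [MetricSpace T] (f : ℝ → T) (ℓ : ℝ) : Prop :=
  0 ≤ ℓ ∧ ∀ s ∈ Set.Icc (0 : ℝ) ℓ, ∀ t ∈ Set.Icc (0 : ℝ) ℓ, dist (f s) (f t) = |s - t|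

/-- A geodesic metric space: any two points are joined by a geodesic segment. -/
def GeodesicSpace (T : Type*) [MetricSpace T] : Prop :=
  ∀ x y : T, ∃ (f : ℝ → T) (ℓ : ℝ), IsGeodesicSeg f ℓ ∧ f 0 = x ∧ f ℓ = y

/-- The four-point (0-hyperbolicity) condition. -/
def ZeroHyperbolic (T : Type*) [MetricSpace T] : Prop :=
  ∀ x y z w : T,
    dist x w + dist y z ≤ max (dist x y + dist z w) (dist x z + dist y w)

/-- An arc in `T`: the image of a geodesic segment.  It is nondegenerate when `0 < ℓ`. -/
def IsNondegenArc {T : Type*} [MetricSpace T] (A : Set T) : Prop :=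
  ∃ (f : ℝ → T) (ℓ : ℝ), 0 < ℓ ∧ IsGeodesicSeg f ℓ ∧ A = f '' Set.Icc 0 ℓ

/-- The set of connected components of a subset `S` of a topological space. -/
def connComps {α : Type*} [TopologicalSpace α] (S : Set α) : Set (Set α) :=
  {C | ∃ x ∈ S, C = connectedComponentIn S x}

/-! ### Betweenness in 0-hyperbolic spaces -/

/-- A connected set containing `x` and `z` contains every point `y` between them.  Off `y`, positivity
and vanishing of the Gromov product of `x` and `w` at `y` are both open conditions on `w`, the second
by 0-hyperbolicity. -/
lemma mem_of_between {T : Type*} [MetricSpace T] (hhyp : ZeroHyperbolic T) {x y z : T}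
    (hd : dist x y + dist y z = dist x z) {S : Set T} (hS : IsPreconnected S)
    (hx : x ∈ S) (hz : z ∈ S) : y ∈ S := by
  by_contra hy
  have hyx : y ≠ x := fun h => hy (h ▸ hx)
  have hyz : y ≠ z := fun h => hy (h ▸ hz)
  have hU : IsOpen {w : T | dist x w < dist x y + dist y w} :=
    isOpen_lt (by fun_prop) (by fun_prop)
  have hV : IsOpen {w : T | w ≠ y ∧ dist x y + dist y w ≤ dist x w} := by
    rw [Metric.isOpen_iff]
    rintro w ⟨hwy, hw⟩
    have hpos : 0 < dist y w := dist_pos.2 hwy.symm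
    refine ⟨dist y w, hpos, fun w' hw' => ?_⟩
    rw [Metric.mem_ball] at hw'
    have hw'y : w' ≠ y := by
      rintro rfl
      exact lt_irrefl _ hw'
    have hpos' : 0 < dist y w' := dist_pos.2 hw'y.symm
    refine ⟨hw'y, ?_⟩
    have h := hhyp x w' y w
    rw [dist_comm w' y] at h
    rcases le_max_iff.1 h with h | h
    · linarith
    · linarith
  obtain ⟨w, -, hwU, -, hwV⟩ := hS _ _ hU hV
    (fun w hw => by
      rcases lt_or_ge (dist x w) (dist x y + dist y w) with h | h
      · exact Or.inl h
      · exact Or.inr ⟨fun e => hy (e ▸ hw), h⟩)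
    ⟨x, hx, by
      have := dist_pos.2 hyx
      simp only [Set.mem_ofPred_eq, dist_self]
      linarith [dist_comm x y]⟩
    ⟨z, hz, hyz.symm, hd.le⟩
  exact absurd hwV (not_le.2 hwU)

lemma IsGeodesicSeg.between {T : Type*} [MetricSpace T] {f : ℝ → T} {ℓ : ℝ}
    (hf : IsGeodesicSeg f ℓ) {s t u : ℝ} (hs : 0 ≤ s) (hst : s ≤ t) (htu : t ≤ u) (hu : u ≤ ℓ) :
    dist (f s) (f t) + dist (f t) (f u) = dist (f s) (f u) := by
  rw [hf.2 s ⟨hs, by linarith⟩ t ⟨by linarith, by linarith⟩,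
    hf.2 t ⟨by linarith, by linarith⟩ u ⟨by linarith, hu⟩,
    hf.2 s ⟨hs, by linarith⟩ u ⟨by linarith, hu⟩,
    abs_of_nonpos (by linarith), abs_of_nonpos (by linarith), abs_of_nonpos (by linarith)]
  ring

lemma IsGeodesicSeg.avoid {T : Type*} [MetricSpace T] {f : ℝ → T} {ℓ : ℝ}
    (hf : IsGeodesicSeg f ℓ) {c : ℝ} (hc : c ∈ Set.Icc 0 ℓ) {K : Set T} (hK : IsClosed K)
    (hcK : f c ∉ K) : ∃ δ > 0, ∀ s ∈ Set.Icc 0 ℓ, |s - c| < δ → f s ∉ K := by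
  obtain ⟨δ, hδ, h⟩ := Metric.isOpen_iff.1 hK.isOpen_compl (f c) hcK
  refine ⟨δ, hδ, fun s hs hsc => h ?_⟩
  rw [Metric.mem_ball, hf.2 s hs c hc]
  exact hsc

/-! ### Parity of the number of crossings -/

/-- A predicate on an interval that changes exactly at the points of a finite set `Z` of interior
points differs at the two endpoints iff `Z` has odd cardinality. -/
lemma odd_card_iff_flip (Z : Set ℝ) (P : ℝ → Prop) (u R : ℝ)
    (hconst : ∀ a b, u ≤ a → a ≤ b → b ≤ R → Disjoint (Set.Icc a b) Z → (P a ↔ P b))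
    (hflip : ∀ p ∈ Z ∩ Set.Ioo u R, ∃ ε > 0, ∀ a b, a ∈ Set.Ioo (p - ε) p → b ∈ Set.Ioo p (p + ε) →
      a ∈ Set.Icc u R → b ∈ Set.Icc u R → (P a ↔ ¬ P b)) (F : Finset ℝ) :
    ∀ v, u ≤ v → v ≤ R → (F : Set ℝ) = Z ∩ Set.Icc u v → (F : Set ℝ) ⊆ Set.Ioo u v →
      (Odd F.card ↔ ¬ (P u ↔ P v)) := by
  classical
  induction F using Finset.induction_on_max with
  | empty =>
    intro v huv hvR hF _
    have hc := hconst u v le_rfl huv hvR (by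
      rw [Set.disjoint_iff_inter_eq_empty, Set.inter_comm, ← hF]
      simp)
    simp [hc]
  | insert p s hlt ih =>
    intro v huv hvR hF hsub
    have hp := hsub (by simp : p ∈ ((insert p s : Finset ℝ) : Set ℝ))
    have hpZ : p ∈ Z := by
      have : p ∈ Z ∩ Set.Icc u v := by
        rw [← hF]
        simp
      exact this.1
    obtain ⟨ε, hε, hfl⟩ := hflip p ⟨hpZ, hp.1, hp.2.trans_le hvR⟩
    -- `a` lies just to the left of `p`, beyond all the other points of `Z`.
    obtain ⟨a, ⟨has, hau, haε⟩, hap⟩ : ∃ a, ((∀ x ∈ s, x < a) ∧ u < a ∧ p - ε < a) ∧ a < p := by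
      have h1 : ∀ᶠ a in nhdsWithin p (Set.Iio p), ∀ x ∈ s, x < a := by
        rw [Filter.eventually_all_finset]
        exact fun x hx => nhdsWithin_le_nhds (lt_mem_nhds (hlt x hx))
      have h2 : ∀ᶠ a in nhdsWithin p (Set.Iio p), u < a :=
        nhdsWithin_le_nhds (lt_mem_nhds hp.1)
      have h3 : ∀ᶠ a in nhdsWithin p (Set.Iio p), p - ε < a :=
        nhdsWithin_le_nhds (lt_mem_nhds (by linarith))
      exact ((h1.and (h2.and h3)).and self_mem_nhdsWithin).exists
    obtain ⟨b, hpb, hb⟩ := exists_between (lt_min hp.2 (by linarith : p < p + ε))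
    obtain ⟨hbv, hbε⟩ := lt_min_iff.1 hb
    have hmem : ∀ x, x ∈ Z → u ≤ x → x ≤ v → x = p ∨ x ∈ s := fun x hxZ h1 h2 => by
      have : x ∈ ((insert p s : Finset ℝ) : Set ℝ) := by
        rw [hF]
        exact ⟨hxZ, h1, h2⟩
      simpa using this
    have hsmem : ∀ x ∈ s, x ∈ Z ∧ u < x := fun x hx => by
      have hx' : x ∈ ((insert p s : Finset ℝ) : Set ℝ) := by simp [hx]
      exact ⟨(hF ▸ hx' : x ∈ Z ∩ Set.Icc u v).1, (hsub hx').1⟩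
    have hia := ih a hau.le (by linarith) (by
      ext x
      constructor
      · exact fun hx => ⟨(hsmem x hx).1, (hsmem x hx).2.le, (has x hx).le⟩
      · rintro ⟨hxZ, h1, h2⟩
        rcases hmem x hxZ h1 (by linarith) with h | h
        · linarith
        · exact h) (fun x hx => ⟨(hsmem x hx).2, has x hx⟩)
    have hbc := hconst b v (by linarith) hbv.le hvR (by
      rw [Set.disjoint_left]
      rintro x ⟨h1, h2⟩ hxZ
      rcases hmem x hxZ (by linarith) h2 with h | h
      · linarith
      · linarith [hlt x h])
    have hab := hfl a b ⟨haε, hap⟩ ⟨hpb, hbε⟩ ⟨hau.le, by linarith⟩ ⟨by linarith, by linarith⟩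
    have hps : p ∉ s := fun h => lt_irrefl _ (hlt p h)
    rw [Finset.card_insert_of_notMem hps, Nat.odd_add_one, hia]
    tauto

lemma connComps_of_finite {F : Set ℝ} (hF : F.Finite) :
    connComps F = (fun x => ({x} : Set ℝ)) '' F := by
  have h : ∀ x ∈ F, connectedComponentIn F x = {x} := fun x hx => by
    refine Set.Subset.antisymm (fun z hz => ?_)
      (Set.singleton_subset_iff.2 (mem_connectedComponentIn hx))
    exact hF.countable.isTotallyDisconnected _ (connectedComponentIn_subset F x)
      isPreconnected_connectedComponentIn hz (mem_connectedComponentIn hx)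
  ext C
  constructor
  · rintro ⟨x, hx, rfl⟩
    exact ⟨x, hx, (h x hx).symm⟩
  · rintro ⟨x, hx, rfl⟩
    exact ⟨x, hx, (h x hx).symm⟩

/-- If all crossings of `y` by a transverse path happen strictly between the times `0` and `R`, and
`y` separates `θ 0` from `θ R`, then there are finitely many crossings (transversality isolates
each one) and their number is odd (each one switches sides). -/
lemma odd_crossings {T : Type*} [MetricSpace T] (hhyp : ZeroHyperbolic T) {y : T}
    (htwo : ∃ C₁ C₂ : Set T, C₁ ≠ C₂ ∧ connComps ({y}ᶜ : Set T) = {C₁, C₂})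
    {D : Set ℝ} {θ : ℝ → T} (hθ : ContinuousOn θ D)
    (htrans : ∀ p ∈ D, θ p = y →
      ∃ ε > (0 : ℝ), ∃ C₁ ∈ connComps ({y}ᶜ : Set T), ∃ C₂ ∈ connComps ({y}ᶜ : Set T),
        C₁ ≠ C₂ ∧ θ '' (Set.Ioo (p - ε) p ∩ D) ⊆ C₁ ∧
          θ '' (Set.Ioo p (p + ε) ∩ D) ⊆ C₂)
    {R : ℝ} (hR : 0 ≤ R) (hRD : Set.Icc 0 R ⊆ D)
    (hin : D ∩ θ ⁻¹' {y} ⊆ Set.Ioo 0 R)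
    (hbet : dist (θ 0) y + dist y (θ R) = dist (θ 0) (θ R)) :
    (connComps (D ∩ θ ⁻¹' {y})).Finite ∧ Odd (connComps (D ∩ θ ⁻¹' {y})).ncard := by
  set Z := D ∩ θ ⁻¹' {y} with hZ
  have hsubc : ∀ C ∈ connComps ({y}ᶜ : Set T), y ∉ C := by
    rintro C ⟨x, -, rfl⟩ hyC
    exact connectedComponentIn_subset _ _ hyC rfl
  have hθR : ContinuousOn θ (Set.Icc 0 R) := hθ.mono hRD
  have hfin : Z.Finite := by
    by_contra hinf
    obtain ⟨p, hpR, hp⟩ := Set.Infinite.exists_accPt_of_subset_isCompact hinf isCompact_Icc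
      (hin.trans Set.Ioo_subset_Icc_self)
    have hcl : IsClosed Z := by
      have : Z = Set.Icc 0 R ∩ θ ⁻¹' {y} := by
        ext x
        exact ⟨fun hx => ⟨Set.Ioo_subset_Icc_self (hin hx), hx.2⟩, fun hx => ⟨hRD hx.1, hx.2⟩⟩
      rw [this]
      exact hθR.preimage_isClosed_of_isClosed isClosed_Icc isClosed_singleton
    have hpZ : p ∈ Z := hcl.closure_subset_iff.2 subset_rfl
      (mem_closure_iff_clusterPt.2 hp.clusterPt)
    obtain ⟨ε, hε, C₁, hC₁, C₂, hC₂, -, h1, h2⟩ := htrans p hpZ.1 hpZ.2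
    rw [accPt_iff_frequently] at hp
    obtain ⟨q, ⟨hqp, hqZ⟩, hq⟩ :=
      (hp.and_eventually (Ioo_mem_nhds (by linarith : p - ε < p) (by linarith : p < p + ε))).exists
    have hqy : θ q = y := hqZ.2
    rcases lt_or_gt_of_ne hqp with h | h
    · exact hsubc C₁ hC₁ (hqy ▸ h1 ⟨q, ⟨⟨hq.1, h⟩, hqZ.1⟩, rfl⟩)
    · exact hsubc C₂ hC₂ (hqy ▸ h2 ⟨q, ⟨⟨h, hq.2⟩, hqZ.1⟩, rfl⟩)
  rw [connComps_of_finite hfin]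
  refine ⟨hfin.image _, ?_⟩
  rw [Set.ncard_image_of_injective _ Set.singleton_injective]
  have h0 : θ 0 ≠ y := fun h => lt_irrefl _ (hin ⟨hRD ⟨le_rfl, hR⟩, h⟩).1
  have hRy : θ R ≠ y := fun h => lt_irrefl _ (hin ⟨hRD ⟨hR, le_rfl⟩, h⟩).2
  obtain ⟨A, B, hAB, hcomp⟩ := htwo
  have hcompeq : ∀ C ∈ connComps ({y}ᶜ : Set T), ∀ w ∈ C,
      connectedComponentIn ({y}ᶜ : Set T) w = C := by
    rintro C ⟨x, hx, rfl⟩ w hw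
    exact (connectedComponentIn_eq hw).symm
  have hcAB : ∀ w, w ≠ y → connectedComponentIn ({y}ᶜ : Set T) w = A ∨
      connectedComponentIn ({y}ᶜ : Set T) w = B := fun w hw => by
    have : connectedComponentIn ({y}ᶜ : Set T) w ∈ connComps ({y}ᶜ : Set T) := ⟨w, hw, rfl⟩
    rw [hcomp] at this
    exact this
  have key := odd_card_iff_flip Z (fun t => connectedComponentIn ({y}ᶜ : Set T) (θ t) = A) 0 R
    (by
      intro a b ha hab hb hdis
      have himg : θ '' Set.Icc a b ⊆ connectedComponentIn ({y}ᶜ : Set T) (θ a) := by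
        refine IsPreconnected.subset_connectedComponentIn
          (isPreconnected_Icc.image _ (hθR.mono (Set.Icc_subset_Icc ha hb)))
          ⟨a, ⟨le_rfl, hab⟩, rfl⟩ ?_
        rintro _ ⟨t, ht, rfl⟩ hty
        exact Set.disjoint_left.1 hdis ht ⟨hRD ⟨ha.trans ht.1, ht.2.trans hb⟩, hty⟩
      have := connectedComponentIn_eq (himg ⟨b, ⟨hab, le_rfl⟩, rfl⟩)
      simp only [this])
    (by
      rintro p ⟨hpZ, hp⟩
      obtain ⟨ε, hε, C₁, hC₁, C₂, hC₂, hne, h1, h2⟩ := htrans p hpZ.1 hpZ.2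
      refine ⟨ε, hε, fun a b ha hb haR hbR => ?_⟩
      have e1 := hcompeq C₁ hC₁ _ (h1 ⟨a, ⟨ha, hRD haR⟩, rfl⟩)
      have e2 := hcompeq C₂ hC₂ _ (h2 ⟨b, ⟨hb, hRD hbR⟩, rfl⟩)
      simp only [e1, e2]
      rw [hcomp] at hC₁ hC₂
      rcases hC₁ with rfl | rfl <;> rcases hC₂ with rfl | rfl <;> simp [hAB, hAB.symm] at hne ⊢)
    hfin.toFinset R hR le_rfl
    (by
      rw [hfin.coe_toFinset]
      exact (Set.inter_eq_left.2 (hin.trans Set.Ioo_subset_Icc_self)).symm)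
    (by
      rw [hfin.coe_toFinset]
      exact hin)
  rw [Set.ncard_eq_toFinset_card Z hfin, key]
  -- The endpoints lie in distinct components, since a connected set joining them contains `y`.
  have hdiff : connectedComponentIn ({y}ᶜ : Set T) (θ 0) ≠
      connectedComponentIn ({y}ᶜ : Set T) (θ R) := fun h => by
    have hm := mem_of_between hhyp hbet
      (isPreconnected_connectedComponentIn (F := ({y}ᶜ : Set T)) (x := θ 0))
      (mem_connectedComponentIn h0) (h ▸ mem_connectedComponentIn hRy)
    exact connectedComponentIn_subset _ _ hm rfl
  rcases hcAB _ h0 with h | h <;> rcases hcAB _ hRy with h' | h' <;> rw [h, h'] at hdiff ⊢ <;> simp [hAB, hAB.symm] at hdiff ⊢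

/-! ### The trichotomy -/

/-- Lemma 6.5 of the paper.  Let `T` be an ℝ-tree, `T₀ ⊆ T` a set of
points each separating `T` into exactly two components and meeting every nondegenerate
arc, and let `θ` be a continuous map to `T` defined on the combinatorial line `ℝ` or ray
`[0,∞)`, transverse to every point of `T₀`, such that each edge `[n, n+1]` of the domain
meets each point-preimage in a connected set.  Then: (1) some nondegenerate arc consists
of points of `T₀` with finitely many, oddly many preimage components; or (2) some point
has a preimage with infinitely many components; or (3) there are point-preimages of
arbitrarily large diameter. -/
theorem rtree_transverse_trichotomy
    {T : Type*} [MetricSpace T]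
    (hgeo : GeodesicSpace T) (hhyp : ZeroHyperbolic T)
    (T₀ : Set T)
    (htwo : ∀ y ∈ T₀, ∃ C₁ C₂ : Set T, C₁ ≠ C₂ ∧
      connComps ({y}ᶜ : Set T) = {C₁, C₂})
    (hdense : ∀ A : Set T, IsNondegenArc A → (A ∩ T₀).Nonempty)
    (D : Set ℝ) (hD : D = Set.univ ∨ D = Set.Ici 0)
    (θ : ℝ → T) (hθ : ContinuousOn θ D)
    (htrans : ∀ y ∈ T₀, ∀ p ∈ D, θ p = y →
      ∃ ε > (0 : ℝ), ∃ C₁ ∈ connComps ({y}ᶜ : Set T), ∃ C₂ ∈ connComps ({y}ᶜ : Set T),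
        C₁ ≠ C₂ ∧ θ '' (Set.Ioo (p - ε) p ∩ D) ⊆ C₁ ∧
          θ '' (Set.Ioo p (p + ε) ∩ D) ⊆ C₂)
    (hedge : ∀ n : ℤ, Set.Icc (n : ℝ) (n + 1) ⊆ D → ∀ y : T,
      IsPreconnected (Set.Icc (n : ℝ) (n + 1) ∩ θ ⁻¹' {y})) :
    (∃ A : Set T, IsNondegenArc A ∧ ∀ y ∈ A ∩ T₀,
        (connComps (D ∩ θ ⁻¹' {y})).Finite ∧ Odd (connComps (D ∩ θ ⁻¹' {y})).ncard) ∨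
    (∃ y : T, (connComps (D ∩ θ ⁻¹' {y})).Infinite) ∨
    (∀ r : ℝ, 0 ≤ r → ∃ y : T,
        ENNReal.ofReal r ≤ EMetric.diam (D ∩ θ ⁻¹' {y})) := by
  by_contra hcon
  rw [not_or, not_or] at hcon
  obtain ⟨hno1, -, hno3⟩ := hcon
  push Not at hno3
  obtain ⟨r, hr0, hr⟩ := hno3
  have hclose : ∀ s ∈ D, ∀ t ∈ D, θ s = θ t → |s - t| < r := by
    intro s hs t ht hst
    have h1 : edist s t ≤ Metric.ediam (D ∩ θ ⁻¹' {θ t}) :=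
      Metric.edist_le_ediam_of_mem ⟨hs, hst⟩ ⟨ht, rfl⟩
    have h2 := h1.trans_lt (hr (θ t))
    rw [edist_dist, ENNReal.ofReal_lt_ofReal_iff_of_nonneg dist_nonneg, Real.dist_eq] at h2
    exact h2
  have hIci : Set.Ici 0 ⊆ D := by
    rcases hD with rfl | rfl
    · exact Set.subset_univ _
    · exact subset_rfl
  have hDcl : IsClosed D := by
    rcases hD with rfl | rfl
    · exact isClosed_univ
    · exact isClosed_Ici
  have hDord : Set.OrdConnected D := by
    rcases hD with rfl | rfl <;> infer_instance
  have hIccD : Set.Icc 0 r ⊆ D := fun t ht => hIci ht.1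
  -- The two ends of the path: `Sm` is the image of the past, `Sp` that of the future.
  set Sm : Set T := θ '' (D ∩ Set.Iic 0) with hSm
  set Sp : Set T := θ '' Set.Ici r with hSp
  have hSmc : IsPreconnected Sm :=
    (hDord.inter Set.ordConnected_Iic).isPreconnected.image _ (hθ.mono Set.inter_subset_left)
  have hIciD : Set.Ici r ⊆ D := (Set.Ici_subset_Ici.2 hr0).trans hIci
  have hSpc : IsPreconnected Sp := isPreconnected_Ici.image _ (hθ.mono hIciD)
  have hMid : IsPreconnected (θ '' Set.Icc 0 r) := isPreconnected_Icc.image _ (hθ.mono hIccD)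
  have hdis : ∀ w ∈ Sm, w ∉ Sp := by
    rintro w ⟨s, ⟨hsD, hs⟩, rfl⟩ ⟨t, ht, hts⟩
    have := hclose t (hIciD ht) s hsD hts
    have h1 := le_abs_self (t - s)
    rw [Set.mem_Iic] at hs
    rw [Set.mem_Ici] at ht
    linarith
  have ha : θ 0 ∈ Sm := ⟨0, ⟨hIci Set.self_mem_Ici, Set.self_mem_Iic⟩, rfl⟩
  have hb : θ r ∈ Sp := ⟨r, Set.self_mem_Ici, rfl⟩
  obtain ⟨f, ℓ, hf, hf0, hfℓ⟩ := hgeo (θ 0) (θ r)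
  have hℓ : 0 ≤ ℓ := hf.1
  have hmid : ∀ s ∈ Set.Icc 0 ℓ, f s ∈ θ '' Set.Icc 0 r := fun s hs =>
    mem_of_between hhyp (hf.between le_rfl hs.1 hs.2 le_rfl) hMid
      (hf0 ▸ ⟨0, ⟨le_rfl, hr0⟩, rfl⟩) (hfℓ ▸ ⟨r, ⟨hr0, le_rfl⟩, rfl⟩)
  have hdown : ∀ s t, 0 ≤ s → s ≤ t → t ≤ ℓ → f t ∈ Sm → f s ∈ Sm := fun s t h0 h1 h2 h3 =>
    mem_of_between hhyp (hf.between le_rfl h0 h1 h2) hSmc (hf0 ▸ ha) h3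
  have hup : ∀ s t, 0 ≤ s → s ≤ t → t ≤ ℓ → f s ∈ Sp → f t ∈ Sp := fun s t h0 h1 h2 h3 =>
    mem_of_between hhyp (hf.between h0 h1 h2 le_rfl) hSpc h3 (hfℓ ▸ hb)
  -- `c` and `d` delimit the gap between the two ends along the geodesic.
  set Im : Set ℝ := {s | s ∈ Set.Icc 0 ℓ ∧ f s ∈ Sm} with hIm
  set Ip : Set ℝ := {s | s ∈ Set.Icc 0 ℓ ∧ f s ∈ Sp} with hIp
  have h0m : (0 : ℝ) ∈ Im := ⟨⟨le_rfl, hℓ⟩, hf0 ▸ ha⟩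
  have hℓp : ℓ ∈ Ip := ⟨⟨hℓ, le_rfl⟩, hfℓ ▸ hb⟩
  have hlt : ∀ s ∈ Im, ∀ t ∈ Ip, s < t := fun s hs t ht => by
    by_contra hle
    exact hdis _ (hdown t s ht.1.1 (not_lt.1 hle) hs.1.2 hs.2) ht.2
  have hbdm : BddAbove Im := ⟨ℓ, fun s hs => hs.1.2⟩
  have hbdp : BddBelow Ip := ⟨0, fun s hs => hs.1.1⟩
  set c := sSup Im with hc
  set d := sInf Ip with hd
  have hc0 : 0 ≤ c := le_csSup hbdm h0m
  have hdℓ : d ≤ ℓ := csInf_le hbdp hℓp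
  have hcd : c ≤ d := csSup_le ⟨0, h0m⟩ fun s hs => le_csInf ⟨ℓ, hℓp⟩ fun t ht => (hlt s hs t ht).le
  rcases hcd.lt_or_eq with hcd | hcd
  · -- A genuine gap: the points of its middle third are crossed only between times `0` and `r`.
    refine hno1 ⟨_, ⟨fun t => f ((2 * c + d) / 3 + t), (d - c) / 3, by linarith,
      ⟨by linarith, fun s hs t ht => ?_⟩, rfl⟩, ?_⟩
    · rw [hf.2 _ ⟨by linarith [hs.1], by linarith [hs.2]⟩ _ ⟨by linarith [ht.1], by linarith [ht.2]⟩]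
      congr 1
      ring
    · rintro y ⟨⟨t, ht, rfl⟩, hyT⟩
      set s := (2 * c + d) / 3 + t with hs
      have hcs : c < s := by linarith [ht.1]
      have hsd : s < d := by linarith [ht.2]
      have hsI : s ∈ Set.Icc 0 ℓ := ⟨by linarith, by linarith⟩
      have hsm : f s ∉ Sm := fun h => absurd (le_csSup hbdm ⟨hsI, h⟩) (not_le.2 hcs)
      have hsp : f s ∉ Sp := fun h => absurd (csInf_le hbdp ⟨hsI, h⟩) (not_le.2 hsd)
      refine odd_crossings hhyp (htwo _ hyT) hθ (htrans _ hyT) hr0 hIccD ?_ ?_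
      · rintro q ⟨hqD, hq⟩
        have hq' : θ q = f s := hq
        constructor
        · by_contra h
          exact hsm ⟨q, ⟨hqD, not_lt.1 h⟩, hq'⟩
        · by_contra h
          exact hsp ⟨q, not_lt.1 h, hq'⟩
      · rw [← hf0, ← hfℓ]
        exact hf.between le_rfl hsI.1 hsI.2 le_rfl
  · have hcI : c ∈ Set.Icc 0 ℓ := ⟨hc0, hcd ▸ hdℓ⟩
    by_cases hcp : f c ∈ Sp
    · -- The past accumulates at `f c` without reaching it: points of the geodesic just before `f c`
      -- are visited both between times `0` and `r` and at arbitrarily negative times.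
      have hcm : f c ∉ Sm := fun h => hdis _ h hcp
      have hK : IsClosed (θ '' (D ∩ Set.Icc (-r) 0)) :=
        ((isCompact_Icc.inter_left hDcl).image_of_continuousOn
          (hθ.mono Set.inter_subset_left)).isClosed
      obtain ⟨δ, hδ, hav⟩ := hf.avoid hcI hK (fun ⟨t, ht, h⟩ => hcm ⟨t, ⟨ht.1, ht.2.2⟩, h⟩)
      obtain ⟨s, hs, hcs⟩ := exists_lt_of_lt_csSup ⟨0, h0m⟩ (by linarith : c - δ < sSup Im)
      have hsc : s ≤ c := le_csSup hbdm hs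
      have hnot := hav s hs.1 (by rw [abs_lt]; constructor <;> linarith)
      obtain ⟨t, ⟨htD, ht⟩, hts⟩ := hs.2
      obtain ⟨t', ht', hts'⟩ := hmid s hs.1
      have h1 : t < -r := by
        by_contra h
        exact hnot ⟨t, ⟨htD, not_lt.1 h, ht⟩, hts⟩
      have h2 := hclose t' (hIccD ht') t htD (hts'.trans hts.symm)
      have h3 := le_abs_self (t' - t)
      linarith [ht'.1]
    · -- Symmetrically, the future accumulates at `f c` without reaching it.
      have hK : IsClosed (θ '' Set.Icc r (2 * r)) :=
        (isCompact_Icc.image_of_continuousOn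
          (hθ.mono (Set.Icc_subset_Ici_self.trans hIciD))).isClosed
      obtain ⟨δ, hδ, hav⟩ := hf.avoid hcI hK (fun ⟨t, ht, h⟩ => hcp ⟨t, ht.1, h⟩)
      obtain ⟨s, hs, hcs⟩ := exists_lt_of_csInf_lt ⟨ℓ, hℓp⟩ (by linarith : sInf Ip < c + δ)
      have hsc : d ≤ s := csInf_le hbdp hs
      have hnot := hav s hs.1 (by rw [abs_lt]; constructor <;> linarith)
      obtain ⟨t, ht, hts⟩ := hs.2
      obtain ⟨t', ht', hts'⟩ := hmid s hs.1
      have h1 : 2 * r < t := by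
        by_contra h
        exact hnot ⟨t, ⟨ht, not_lt.1 h⟩, hts⟩
      have h2 := hclose t (hIciD ht) t' (hIccD ht') (hts.trans hts'.symm)
      have h3 := le_abs_self (t - t')
      linarith [ht'.2]
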